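/- arXiv:1707.08318 — 2 statements merged into one kernel-verified Lean document; each statement's English description precedes it below -/
import Mathlib

section
/- Let b be a connected, canonically compactifiable graph over a finite discrete measure space (X,m), let c < 0 and let h ∈ ℓ²(X,m) with h not identically zero. If there exist a lower solution u₀ ∈ D(L) and an upper solution u₁ ∈ D(L) for the equation Lu = h e^u − c with u₀ ≤ u₁ pointwise, then there exists u ∈ D(L) with u₀ ≤ u ≤ u₁ pointwise and Lu(x) = h(x)e^{u(x)} − c for all x ∈ X. -/
open scoped BigOperators

/-- `u` is square-summable with respect to the measure `m`, i.e. `u ∈ ℓ²(X,m)`. -/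
def MemL2 {X : Type*} (m : X → ℝ) (u : X → ℝ) : Prop :=
  Summable (fun x => u x ^ 2 * m x)

/-- `u` has finite energy: the sum defining `Q̃(u)` converges. -/
def FinEnergy {X : Type*} (b : X → X → ℝ) (u : X → ℝ) : Prop :=
  Summable (fun p : X × X => b p.1 p.2 * (u p.1 - u p.2) ^ 2)

/-- The energy `Q(u) = (1/2) Σ_{x,y} b(x,y) (u(x) - u(y))²`. -/
noncomputable def energy {X : Type*} (b : X → X → ℝ) (u : X → ℝ) : ℝ :=
  (1 / 2) * ∑' p : X × X, b p.1 p.2 * (u p.1 - u p.2) ^ 2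

/-- The bilinear energy form `Q(u,v) = (1/2) Σ_{x,y} b(x,y)(u(x)-u(y))(v(x)-v(y))`. -/
noncomputable def energyBil {X : Type*} (b : X → X → ℝ) (u v : X → ℝ) : ℝ :=
  (1 / 2) * ∑' p : X × X, b p.1 p.2 * (u p.1 - u p.2) * (v p.1 - v p.2)

/-- The form domain `D(Q) = ℓ²(X,m) ∩ D̃`. -/
def MemDQ {X : Type*} (b : X → X → ℝ) (m : X → ℝ) (u : X → ℝ) : Prop :=
  MemL2 m u ∧ FinEnergy b u

/-- The form norm `‖u‖_Q = (Q(u) + ‖u‖₂²)^{1/2}`. -/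
noncomputable def formNorm {X : Type*} (b : X → X → ℝ) (m : X → ℝ) (u : X → ℝ) : ℝ :=
  Real.sqrt (energy b u + ∑' x, u x ^ 2 * m x)

/-- `b` is a graph over `X`: symmetric, nonnegative, zero on the diagonal,
with summable rows. -/
structure IsGraph {X : Type*} (b : X → X → ℝ) : Prop where
  symm : ∀ x y, b x y = b y x
  nonneg : ∀ x y, 0 ≤ b x y
  diag : ∀ x, b x x = 0
  row_summable : ∀ x, Summable (fun y => b x y)

/-- The graph `b` is connected: any two points are joined by a path of edges of
positive weight. -/
def GraphConnected {X : Type*} (b : X → X → ℝ) : Prop :=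
  ∀ x y : X, Relation.ReflTransGen (fun a c => 0 < b a c) x y

/-- `(X,m)` is a finite discrete measure space: `m > 0` everywhere and `m(X) < ∞`. -/
structure FinMeasure {X : Type*} (m : X → ℝ) : Prop where
  pos : ∀ x, 0 < m x
  summable : Summable m

/-- The graph `b` over `(X,m)` is canonically compactifiable: every function in
`D(Q)` is bounded. -/
def CanCompact {X : Type*} (b : X → X → ℝ) (m : X → ℝ) : Prop :=
  ∀ u : X → ℝ, MemDQ b m u → ∃ M : ℝ, ∀ x, |u x| ≤ M

/-- `u ∈ D(L)` with `L u = f` for the Neumann Laplacian `L`: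
`u ∈ D(Q)`, `f ∈ ℓ²(X,m)` and `Q(u,v) = ⟨f,v⟩` for all `v ∈ D(Q)`. -/
def IsLap {X : Type*} (b : X → X → ℝ) (m : X → ℝ) (u f : X → ℝ) : Prop :=
  MemDQ b m u ∧ MemL2 m f ∧
    ∀ v : X → ℝ, MemDQ b m v → energyBil b u v = ∑' x, f x * v x * m x

/-- The mean `ū = ⟨u,1⟩ / m(X)`. -/
noncomputable def mean {X : Type*} (m : X → ℝ) (u : X → ℝ) : ℝ :=
  (∑' x, u x * m x) / (∑' x, m x)


theorem memL2_add {X : Type*} {m u v : X → ℝ} (hm : ∀ x, 0 < m x) (hu : MemL2 m u)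
    (hv : MemL2 m v) : MemL2 m (fun x => u x + v x) := by
  unfold MemL2 at *
  refine Summable.of_nonneg_of_le (fun x => by have := hm x; positivity) (fun x => ?_)
    ((hu.add hv).mul_left 2)
  have := hm x
  nlinarith [mul_nonneg this.le (sq_nonneg (u x - v x))]

theorem memL2_of_le {X : Type*} {m u v : X → ℝ} (hm : ∀ x, 0 < m x) (hv : MemL2 m v)
    (C : ℝ) (huv : ∀ x, |u x| ≤ C * |v x|) : MemL2 m u := by
  unfold MemL2 at *
  refine Summable.of_nonneg_of_le (fun x => by have := hm x; positivity) (fun x => ?_)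
    (hv.mul_left (C ^ 2))
  have h1 : u x ^ 2 ≤ (C * |v x|) ^ 2 := by
    rw [← sq_abs (u x)]
    exact pow_le_pow_left₀ (abs_nonneg _) (huv x) 2
  rw [mul_pow, sq_abs] at h1
  nlinarith [hm x, mul_le_mul_of_nonneg_right h1 (hm x).le]

theorem summable_mul_of_memL2 {X : Type*} {m u v : X → ℝ} (hm : ∀ x, 0 < m x) (hu : MemL2 m u)
    (hv : MemL2 m v) : Summable (fun x => u x * v x * m x) := by
  unfold MemL2 at *
  refine Summable.of_norm_bounded (hu.add hv) (fun x => ?_)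
  have := hm x
  rw [Real.norm_eq_abs, abs_mul, abs_mul, abs_of_pos this]
  rw [← sq_abs (u x), ← sq_abs (v x), ← add_mul]
  refine mul_le_mul_of_nonneg_right ?_ this.le
  nlinarith [sq_nonneg (|u x| - |v x|), abs_nonneg (u x), abs_nonneg (v x)]

theorem summable_energyBil {X : Type*} {b : X → X → ℝ} {u v : X → ℝ} (hb : IsGraph b)
    (hu : FinEnergy b u) (hv : FinEnergy b v) :
    Summable (fun p : X × X => b p.1 p.2 * (u p.1 - u p.2) * (v p.1 - v p.2)) := by
  unfold FinEnergy at *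
  refine Summable.of_norm_bounded (hu.add hv) (fun p => ?_)
  have := hb.nonneg p.1 p.2
  rw [Real.norm_eq_abs, abs_mul, abs_mul, abs_of_nonneg this]
  rw [← sq_abs (u p.1 - u p.2), ← sq_abs (v p.1 - v p.2), ← mul_add, mul_assoc]
  refine mul_le_mul_of_nonneg_left ?_ this
  nlinarith [sq_nonneg (|u p.1 - u p.2| - |v p.1 - v p.2|), abs_nonneg (u p.1 - u p.2),
    abs_nonneg (v p.1 - v p.2)]

theorem memDQ_sub {X : Type*} {b : X → X → ℝ} {m u v : X → ℝ} (hb : IsGraph b)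
    (hm : ∀ x, 0 < m x) (hu : MemDQ b m u) (hv : MemDQ b m v) :
    MemDQ b m (fun x => u x - v x) := by
  refine ⟨?_, ?_⟩
  · have := memL2_add hm hu.1 (memL2_of_le (u := fun x => - v x) hm hv.1 1 (fun x => by simp))
    simpa [sub_eq_add_neg] using this
  · have hu := hu.2
    have hv := hv.2
    unfold FinEnergy at *
    refine Summable.of_nonneg_of_le
      (fun p => mul_nonneg (hb.nonneg _ _) (sq_nonneg _)) (fun p => ?_)
      ((hu.add hv).mul_left 2)
    have := hb.nonneg p.1 p.2
    nlinarith [mul_nonneg this (sq_nonneg ((u p.1 - u p.2) + (v p.1 - v p.2)))]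

theorem memDQ_pos {X : Type*} {b : X → X → ℝ} {m u : X → ℝ} (hb : IsGraph b)
    (hm : ∀ x, 0 < m x) (hu : MemDQ b m u) : MemDQ b m (fun x => max (u x) 0) := by
  refine ⟨memL2_of_le hm hu.1 1 (fun x => ?_), ?_⟩
  · rw [one_mul, abs_of_nonneg (le_max_right _ _)]
    exact max_le (le_abs_self _) (abs_nonneg _)
  · have hu := hu.2
    unfold FinEnergy at *
    refine Summable.of_nonneg_of_le
      (fun p => mul_nonneg (hb.nonneg _ _) (sq_nonneg _)) (fun p => ?_) hu
    exact mul_le_mul_of_nonneg_left (sq_le_sq.2 (abs_max_sub_max_le_abs _ _ _)) (hb.nonneg _ _)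

theorem lap_comparison {X : Type*} {b : X → X → ℝ} {m k u f v g : X → ℝ} (hb : IsGraph b)
    (hm : ∀ x, 0 < m x) (hk : ∀ x, 1 ≤ k x) (hu : IsLap b m u f) (hv : IsLap b m v g)
    (hfg : ∀ x, f x + k x * u x ≤ g x + k x * v x) : ∀ x, u x ≤ v x := by
  have hd := memDQ_sub hb hm hu.1 hv.1
  have hp := memDQ_pos hb hm hd
  set φ : X → ℝ := fun x => max (u x - v x) 0 with hφ
  have h1 := hu.2.2 φ hp
  have h2 := hv.2.2 φ hp
  have s1 := summable_energyBil hb hu.1.2 hp.2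
  have s2 := summable_energyBil hb hv.1.2 hp.2
  have t1 := summable_mul_of_memL2 hm hu.2.1 hp.1
  have t2 := summable_mul_of_memL2 hm hv.2.1 hp.1
  have e1 : 0 ≤ energyBil b u φ - energyBil b v φ := by
    unfold energyBil
    rw [← mul_sub, ← s1.tsum_sub s2]
    refine mul_nonneg (by norm_num) (tsum_nonneg fun p => ?_)
    have : b p.1 p.2 * (u p.1 - u p.2) * (φ p.1 - φ p.2)
        - b p.1 p.2 * (v p.1 - v p.2) * (φ p.1 - φ p.2)
        = b p.1 p.2 * (((u p.1 - v p.1) - (u p.2 - v p.2)) * (φ p.1 - φ p.2)) := by ring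
    rw [this]
    refine mul_nonneg (hb.nonneg _ _) ?_
    simp only [hφ]
    rcases le_total (u p.1 - v p.1) (u p.2 - v p.2) with hle | hle
    · exact mul_nonneg_of_nonpos_of_nonpos (by linarith)
        (by linarith [max_le_max_right 0 hle])
    · exact mul_nonneg (by linarith) (by linarith [max_le_max_right 0 hle])
  rw [h1, h2, ← t1.tsum_sub t2] at e1
  have hle : ∀ x, f x * φ x * m x - g x * φ x * m x ≤ - (φ x ^ 2 * m x) := by
    intro x
    have a1 : 0 ≤ φ x := le_max_right _ _
    have a2 : (u x - v x) * φ x = φ x ^ 2 := by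
      simp only [hφ]
      rcases le_total (u x - v x) 0 with hle | hle
      · rw [max_eq_right hle]; ring
      · rw [max_eq_left hle]; ring
    have a3 : (f x - g x) * φ x ≤ - (k x * φ x ^ 2) := by
      rw [← a2]
      nlinarith [mul_nonneg (sub_nonneg.2 (hfg x)) a1]
    have a4 : (f x - g x) * φ x ≤ - (φ x ^ 2) := by nlinarith [hk x, sq_nonneg (φ x)]
    nlinarith [mul_le_mul_of_nonneg_right a4 (hm x).le]
  have hsum : ∑' x, (f x * φ x * m x - g x * φ x * m x) ≤ ∑' x, - (φ x ^ 2 * m x) :=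
    (t1.sub t2).tsum_le_tsum hle hp.1.neg
  rw [tsum_neg] at hsum
  intro x
  have h3 : φ x ^ 2 * m x ≤ ∑' x, φ x ^ 2 * m x :=
    Summable.le_tsum hp.1 x (fun y _ => mul_nonneg (sq_nonneg _) (hm y).le)
  have h4 : φ x ^ 2 ≤ 0 := by
    by_contra hcon
    have := mul_pos (not_le.1 hcon) (hm x)
    linarith
  have h5 : φ x = 0 := by
    have := le_antisymm h4 (sq_nonneg _)
    exact pow_eq_zero_iff (two_ne_zero) |>.1 this
  have h6 : u x - v x ≤ φ x := le_max_left _ _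
  linarith

theorem linear_solve {X : Type*} {b : X → X → ℝ} {m k g : X → ℝ} (hb : IsGraph b)
    (hm : FinMeasure m) (hcc : CanCompact b m) (hk : ∀ x, 1 ≤ k x) (hk2 : MemL2 m k)
    (hg : MemL2 m g) : ∃ w, IsLap b m w (fun x => g x - k x * w x) := by
  have hmp := hm.pos
  have hone : MemL2 m (fun _ => 1) := by simpa [MemL2] using hm.summable
  have hkm : Summable (fun x => k x * m x) := by
    simpa using summable_mul_of_memL2 hmp hk2 hone
  set a : X → ℝ := fun x => Real.sqrt (k x * m x) with ha
  set β : X × X → ℝ := fun p => Real.sqrt (b p.1 p.2 / 2) with hβ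
  have hkm0 : ∀ x, 0 < k x * m x := fun x => mul_pos (by linarith [hk x]) (hmp x)
  have ha0 : ∀ x, 0 < a x := fun x => Real.sqrt_pos.2 (hkm0 x)
  have ha2 : ∀ x, a x * a x = k x * m x := fun x => Real.mul_self_sqrt (hkm0 x).le
  have hβ2 : ∀ p, β p * β p = b p.1 p.2 / 2 := fun p =>
    Real.mul_self_sqrt (by linarith [hb.nonneg p.1 p.2])
  let H := lp (fun _ : (X × X) ⊕ X => ℝ) 2
  let ev : (X × X) ⊕ X → (H →L[ℝ] ℝ) := fun i =>
    lp.evalCLM ℝ (fun _ : (X × X) ⊕ X => ℝ) 2 i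
  have hev : ∀ i (F : H), ev i F = F i := fun i F => rfl
  let Λ : X × X → (H →L[ℝ] ℝ) := fun p =>
    ev (.inl p) - β p • ((a p.1)⁻¹ • ev (.inr p.1) - (a p.2)⁻¹ • ev (.inr p.2))
  let V : Submodule ℝ H := ⨅ p, LinearMap.ker (Λ p).toLinearMap
  have hV : ∀ F : H, F ∈ V ↔ ∀ p : X × X, F (.inl p) =
      β p * ((a p.1)⁻¹ * F (.inr p.1) - (a p.2)⁻¹ * F (.inr p.2)) := by
    intro F
    simp only [V, Submodule.mem_iInf, LinearMap.mem_ker]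
    refine forall_congr' fun p => ?_
    exact sub_eq_zero (a := F (.inl p))
  have hVc : IsClosed (V : Set H) := by
    simp only [V, Submodule.coe_iInf]
    exact isClosed_iInter fun p => (Λ p).isClosed_ker
  have : CompleteSpace V := hVc.completeSpace_coe
  have mem_of : ∀ (F : (X × X) ⊕ X → ℝ), Summable (fun p => F (.inl p) ^ 2) →
      Summable (fun x => F (.inr x) ^ 2) → Memℓp F 2 := by
    intro F h1 h2
    rw [memℓp_gen_iff (by norm_num)]
    have : Summable (fun i => F i ^ 2) := Summable.sum (fun i => F i ^ 2) h1 h2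
    simpa using this
  have of_mem : ∀ F : H, Summable (fun i => F i ^ 2) := by
    intro F
    have := (memℓp_gen_iff (p := 2) (by norm_num)).1 (lp.memℓp F)
    simpa using this
  -- the embedding of the form domain
  have emb : ∀ v, MemDQ b m v → ∃ F : H, F ∈ V ∧
      (∀ p, F (.inl p) = β p * (v p.1 - v p.2)) ∧ ∀ x, F (.inr x) = a x * v x := by
    intro v hv
    obtain ⟨M, hM⟩ := hcc v hv
    let F : (X × X) ⊕ X → ℝ := Sum.elim (fun p => β p * (v p.1 - v p.2)) (fun x => a x * v x)
    have hF : Memℓp F 2 := by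
      refine mem_of F ?_ ?_
      · have h2 : Summable (fun p : X × X => b p.1 p.2 * (v p.1 - v p.2) ^ 2) := hv.2
        refine (h2.mul_left (1 / 2)).congr fun p => ?_
        simp only [F, Sum.elim_inl, mul_pow, sq (β p), hβ2]
        ring
      · refine Summable.of_nonneg_of_le (fun x => sq_nonneg _) (fun x => ?_) (hkm.mul_left (M ^ 2))
        simp only [F, Sum.elim_inr, mul_pow, sq (a x), ha2]
        rw [mul_comm]
        refine mul_le_mul_of_nonneg_right ?_ (hkm0 x).le
        rw [← sq_abs]
        exact pow_le_pow_left₀ (abs_nonneg _) (hM x) 2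
    refine ⟨⟨F, hF⟩, ?_, fun p => rfl, fun x => rfl⟩
    rw [hV]
    intro p
    change β p * (v p.1 - v p.2) = β p * ((a p.1)⁻¹ * (a p.1 * v p.1)
      - (a p.2)⁻¹ * (a p.2 * v p.2))
    rw [inv_mul_cancel_left₀ (ha0 _).ne', inv_mul_cancel_left₀ (ha0 _).ne']
  let G' : (X × X) ⊕ X → ℝ := Sum.elim (fun _ => 0) (fun x => g x * m x / a x)
  have hG' : Memℓp G' 2 := by
    refine mem_of G' ?_ ?_
    · simp [G']
    · refine Summable.of_nonneg_of_le (fun x => sq_nonneg _) (fun x => ?_) hg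
      simp only [G', Sum.elim_inr, div_pow, sq (a x), ha2]
      rw [div_le_iff₀ (hkm0 x)]
      have h1 : 0 ≤ g x ^ 2 * m x ^ 2 := by positivity
      nlinarith [hk x]
  let G : H := ⟨G', hG'⟩
  let W : H := V.starProjection G
  have hWV : W ∈ V := V.starProjection_apply_mem G
  obtain ⟨w, hWr, hWl⟩ : ∃ w : X → ℝ, (∀ x, W (.inr x) = a x * w x) ∧
      ∀ p, W (.inl p) = β p * (w p.1 - w p.2) :=
    ⟨fun x => (a x)⁻¹ * W (.inr x), fun x => (mul_inv_cancel_left₀ (ha0 _).ne' _).symm,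
      (hV W).1 hWV⟩
  have sW := of_mem W
  have sWl : Summable (fun p : X × X => W (.inl p) ^ 2) := sW.comp_injective Sum.inl_injective
  have sWr : Summable (fun x : X => W (.inr x) ^ 2) := sW.comp_injective Sum.inr_injective
  have hw : MemDQ b m w := by
    refine ⟨?_, ?_⟩
    · refine Summable.of_nonneg_of_le (fun x => mul_nonneg (sq_nonneg _) (hmp x).le) (fun x => ?_) sWr
      rw [hWr, mul_pow, sq (a x), ha2]
      have h1 : 0 ≤ w x ^ 2 * m x := mul_nonneg (sq_nonneg _) (hmp x).le
      nlinarith [hk x]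
    · refine (sWl.mul_left 2).congr fun p => ?_
      rw [hWl, mul_pow, sq (β p), hβ2]
      ring
  obtain ⟨M, hM⟩ := hcc w hw
  have hkw : MemL2 m (fun x => k x * w x) :=
    memL2_of_le hmp hk2 M (fun x => by
      rw [abs_mul, mul_comm]
      exact mul_le_mul_of_nonneg_right (hM x) (abs_nonneg _))
  have hgkw : MemL2 m (fun x => g x - k x * w x) := by
    have := memL2_add hmp hg (memL2_of_le (u := fun x => - (k x * w x)) hmp hkw 1
      (fun x => by simp))
    simpa [sub_eq_add_neg] using this
  refine ⟨w, hw, hgkw, fun v hv => ?_⟩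
  obtain ⟨F, hFV, hFl, hFr⟩ := emb v hv
  have horth := V.starProjection_inner_eq_zero G F hFV
  have hsum := lp.hasSum_inner (𝕜 := ℝ) (G - W) F
  have hin : inner ℝ (G - W) F = 0 := horth
  rw [hin] at hsum
  have s1 := (summable_energyBil hb hw.2 hv.2).mul_left (1 / 2)
  have s2 := summable_mul_of_memL2 hmp hgkw hv.1
  have s3 : HasSum (fun i => inner ℝ ((G - W : H) i) (F i))
      (∑' p : X × X, - (1 / 2 * (b p.1 p.2 * (w p.1 - w p.2) * (v p.1 - v p.2)))
        + ∑' x, (g x - k x * w x) * v x * m x) := by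
    refine HasSum.sum ?_ ?_
    · have s1n : Summable (fun p : X × X =>
          - (1 / 2 * (b p.1 p.2 * (w p.1 - w p.2) * (v p.1 - v p.2)))) := s1.neg
      convert s1n.hasSum using 1
      funext p
      change F (.inl p) * (0 - W (.inl p)) = _
      rw [hFl, hWl]
      linear_combination (-(v p.1 - v p.2) * (w p.1 - w p.2)) * hβ2 p
    · convert s2.hasSum using 1
      funext x
      change F (.inr x) * (g x * m x / a x - W (.inr x)) = _
      rw [hFr, hWr]
      have h1 : a x * (g x * m x / a x) = g x * m x := by
        field_simp [(ha0 x).ne']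
      linear_combination v x * h1 - v x * w x * ha2 x
  have h0 := hsum.unique s3
  rw [tsum_neg, tsum_mul_left] at h0
  unfold energyBil
  linarith

/-- existence of a solution between a lower and an upper solution. -/
theorem stmt13 {X : Type*} [Countable X] (b : X → X → ℝ) (m : X → ℝ)
    (hb : IsGraph b) (hconn : GraphConnected b) (hm : FinMeasure m)
    (hcc : CanCompact b m) (c : ℝ) (hc : c < 0)
    (h : X → ℝ) (hh2 : MemL2 m h) (hne : h ≠ 0)
    (u₀ f₀ : X → ℝ) (hu₀ : IsLap b m u₀ f₀)
    (hlow : ∀ x, f₀ x ≤ h x * Real.exp (u₀ x) - c)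
    (u₁ f₁ : X → ℝ) (hu₁ : IsLap b m u₁ f₁)
    (hup : ∀ x, h x * Real.exp (u₁ x) - c ≤ f₁ x)
    (h01 : ∀ x, u₀ x ≤ u₁ x) :
    ∃ u : X → ℝ, (∀ x, u₀ x ≤ u x ∧ u x ≤ u₁ x) ∧
      IsLap b m u (fun x => h x * Real.exp (u x) - c) := by
  have hmp := hm.pos
  have hone : MemL2 m (fun _ => 1) := by simpa [MemL2] using hm.summable
  obtain ⟨M₀, hM₀⟩ := hcc u₀ hu₀.1
  obtain ⟨M₁, hM₁⟩ := hcc u₁ hu₁.1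
  set M := max M₀ M₁ with hMdef
  have hbd : ∀ v : X → ℝ, u₀ ≤ v → v ≤ u₁ → ∀ x, |v x| ≤ M := by
    intro v h0 h1 x
    have a0 := h0 x
    have a1 := h1 x
    have b0 := (abs_le.1 (hM₀ x)).1
    have b1 := (abs_le.1 (hM₁ x)).2
    have c0 : M₀ ≤ M := le_max_left _ _
    have c1 : M₁ ≤ M := le_max_right _ _
    exact abs_le.2 ⟨by linarith, by linarith⟩
  set k : X → ℝ := fun x => |h x| * Real.exp M + 1 with hkdef
  have hk : ∀ x, 1 ≤ k x := fun x => by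
    have : 0 ≤ |h x| * Real.exp M := by positivity
    simp only [hkdef]; linarith
  have hk2 : MemL2 m k := by
    refine memL2_add hmp (memL2_of_le hmp hh2 (Real.exp M) fun x => ?_) hone
    rw [abs_mul, abs_abs, abs_of_pos (Real.exp_pos M), mul_comm]
  have hNL : ∀ v : X → ℝ, u₀ ≤ v → v ≤ u₁ → MemL2 m (fun x => h x * Real.exp (v x) - c) := by
    intro v h0 h1
    have e1 : MemL2 m (fun x => h x * Real.exp (v x)) := by
      refine memL2_of_le hmp hh2 (Real.exp M) fun x => ?_
      rw [abs_mul, abs_of_pos (Real.exp_pos _), mul_comm]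
      exact mul_le_mul_of_nonneg_right
        (Real.exp_le_exp.2 (abs_le.1 (hbd v h0 h1 x)).2) (abs_nonneg _)
    have e2 : MemL2 m (fun _ => -c) := memL2_of_le hmp hone |c| (fun x => by simp)
    simpa [sub_eq_add_neg] using memL2_add hmp e1 e2
  have hkv : ∀ v : X → ℝ, u₀ ≤ v → v ≤ u₁ → MemL2 m (fun x => k x * v x) := by
    intro v h0 h1
    refine memL2_of_le hmp hk2 M (fun x => ?_)
    rw [abs_mul, mul_comm]
    exact mul_le_mul_of_nonneg_right (hbd v h0 h1 x) (abs_nonneg _)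
  let g : (X → ℝ) → X → ℝ := fun v x => (h x * Real.exp (v x) - c) + k x * v x
  have hgmono : ∀ v w : X → ℝ, v ≤ w → (∀ x, w x ≤ M) → ∀ x, g v x ≤ g w x := by
    intro v w hvw hw x
    have h1 := hvw x
    have h2 : Real.exp (w x) - Real.exp (v x) ≤ Real.exp M * (w x - v x) := by
      have e1 : Real.exp (v x) = Real.exp (w x) * Real.exp (v x - w x) := by
        rw [← Real.exp_add]; ring_nf
      have e2 := Real.add_one_le_exp (v x - w x)
      have e3 : Real.exp (w x) ≤ Real.exp M := Real.exp_le_exp.2 (hw x)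
      have e4 := Real.exp_pos (w x)
      rw [e1]
      nlinarith [mul_le_mul_of_nonneg_left e2 e4.le,
        mul_le_mul_of_nonneg_right e3 (sub_nonneg.2 h1)]
    have h3 : 0 ≤ Real.exp (w x) - Real.exp (v x) := sub_nonneg.2 (Real.exp_le_exp.2 h1)
    have h4 : -|h x| * (Real.exp (w x) - Real.exp (v x)) ≤
        h x * (Real.exp (w x) - Real.exp (v x)) :=
      mul_le_mul_of_nonneg_right (neg_abs_le _) h3
    have h5 := mul_le_mul_of_nonneg_left h2 (abs_nonneg (h x))
    simp only [g, hkdef]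
    nlinarith
  have hsolve : ∀ v : Set.Icc u₀ u₁, ∃ w, IsLap b m w (fun x => g v x - k x * w x) :=
    fun v => linear_solve hb hm hcc hk hk2
      (memL2_add hmp (hNL v v.2.1 v.2.2) (hkv v v.2.1 v.2.2))
  choose T hT using hsolve
  have hleM : ∀ v : X → ℝ, u₀ ≤ v → v ≤ u₁ → ∀ x, v x ≤ M := fun v h0 h1 x =>
    (abs_le.1 (hbd v h0 h1 x)).2
  have hT0 : ∀ v, u₀ ≤ T v := fun v => by
    refine lap_comparison hb hmp hk hu₀ (hT v) fun x => ?_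
    have := hgmono u₀ v v.2.1 (hleM v v.2.1 v.2.2) x
    have h2 := hlow x
    simp only [g] at this ⊢
    linarith
  have hT1 : ∀ v, T v ≤ u₁ := fun v => by
    refine lap_comparison hb hmp hk (hT v) hu₁ fun x => ?_
    have := hgmono v u₁ v.2.2 (hleM u₁ h01 le_rfl) x
    have h2 := hup x
    simp only [g] at this ⊢
    linarith
  have : Fact (u₀ ≤ u₁) := ⟨h01⟩
  let S : Set.Icc u₀ u₁ →o Set.Icc u₀ u₁ :=
    { toFun := fun v => ⟨T v, hT0 v, hT1 v⟩
      monotone' := fun v w hvw => by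
        change T v ≤ T w
        refine lap_comparison hb hmp hk (hT v) (hT w) fun x => ?_
        have := hgmono v w hvw (hleM w w.2.1 w.2.2) x
        linarith }
  have hfix : T S.lfp = (S.lfp : X → ℝ) := congrArg Subtype.val S.map_lfp
  refine ⟨(S.lfp : X → ℝ), fun x => ⟨S.lfp.2.1 x, S.lfp.2.2 x⟩, ?_⟩
  have := hT S.lfp
  rw [hfix] at this
  convert this using 1
  funext x
  simp only [g]
  ring
end

section
/- Let b be a connected, canonically compactifiable graph over a finite discrete measure space (X,m), let c > 0, and let h ∈ ℓ²(X,m) with h(x₀) > 0 for some x₀ ∈ X. Then the set B := {v ∈ D(Q) : ⟨h e^v, 1⟩ = c·m(X)} is nonempty and the functional J(v) := (1/2)Q(v) + c·m(X)·v̄ attains its infimum on B: there exists u ∈ B with J(u) ≤ J(v) for all v ∈ B. -/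
open scoped BigOperators

/-- The full double sum. -/
noncomputable def EE {X : Type*} (b : X → X → ℝ) (u : X → ℝ) : ℝ :=
  ∑' p : X × X, b p.1 p.2 * (u p.1 - u p.2) ^ 2

section Aux

variable {X : Type*} {b : X → X → ℝ} {m : X → ℝ}

lemma EE_nonneg (hb : IsGraph b) (u : X → ℝ) : 0 ≤ EE b u :=
  tsum_nonneg fun p => mul_nonneg (hb.nonneg _ _) (sq_nonneg _)

lemma contraction (hb : IsGraph b) {u w : X → ℝ} {k : ℝ} (hu : FinEnergy b u)
    (hw : ∀ x y, (w x - w y) ^ 2 ≤ k * (u x - u y) ^ 2) :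
    FinEnergy b w ∧ EE b w ≤ k * EE b u := by
  have key : ∀ p : X × X, b p.1 p.2 * (w p.1 - w p.2) ^ 2 ≤
      k * (b p.1 p.2 * (u p.1 - u p.2) ^ 2) := fun p => by
    have := mul_le_mul_of_nonneg_left (hw p.1 p.2) (hb.nonneg p.1 p.2)
    linarith
  have h1 : FinEnergy b w := Summable.of_nonneg_of_le
    (fun p => mul_nonneg (hb.nonneg _ _) (sq_nonneg _)) key (hu.mul_left k)
  refine ⟨h1, ?_⟩
  unfold EE
  rw [← tsum_mul_left]
  exact Summable.tsum_le_tsum key h1 (hu.mul_left k)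

lemma path_bound (hb : IsGraph b) (hconn : GraphConnected b) (x₀ x : X) :
    ∃ C : ℝ, 0 ≤ C ∧ ∀ u, FinEnergy b u → (u x - u x₀) ^ 2 ≤ C * EE b u := by
  induction hconn x₀ x with
  | refl => exact ⟨0, le_rfl, fun u _ => by simp⟩
  | @tail y z _ hyz ih =>
    obtain ⟨C, hC, h⟩ := ih
    refine ⟨2 * C + 2 * (b y z)⁻¹, by positivity, fun u hu => ?_⟩
    have h1 := h u hu
    have h2 : b y z * (u y - u z) ^ 2 ≤ EE b u :=
      hu.le_tsum (y, z) (fun p _ => mul_nonneg (hb.nonneg _ _) (sq_nonneg _))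
    have h3 : (u y - u z) ^ 2 ≤ (b y z)⁻¹ * EE b u := by
      rw [inv_mul_eq_div, le_div_iff₀ hyz]; linarith
    nlinarith [sq_nonneg (u y - u x₀ - (u z - u y))]

lemma sup_sub_sq (a c : ℕ → ℝ) (ha : BddAbove (Set.range a)) (hc : BddAbove (Set.range c))
    (hs : Summable fun n => (a n - c n) ^ 2) :
    ((⨆ n, a n) - ⨆ n, c n) ^ 2 ≤ ∑' n, (a n - c n) ^ 2 := by
  have h0 : 0 ≤ ∑' n, (a n - c n) ^ 2 := tsum_nonneg fun n => sq_nonneg _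
  have h1 : ∀ n, |a n - c n| ≤ √(∑' n, (a n - c n) ^ 2) := fun n => by
    apply Real.abs_le_sqrt
    exact hs.le_tsum n (fun _ _ => sq_nonneg _)
  have h2 : (⨆ n, a n) ≤ (⨆ n, c n) + √(∑' n, (a n - c n) ^ 2) := ciSup_le fun n => by
    have := le_ciSup hc n
    have := (abs_le.1 (h1 n)).2
    linarith
  have h3 : (⨆ n, c n) ≤ (⨆ n, a n) + √(∑' n, (a n - c n) ^ 2) := ciSup_le fun n => by
    have := le_ciSup ha n
    have := (abs_le.1 (h1 n)).1
    linarith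
  rw [← Real.sq_sqrt h0]
  apply sq_le_sq'  <;> linarith

lemma swap_summable {Y : Type*} {f : ℕ → Y → ℝ} (hf : ∀ n y, 0 ≤ f n y)
    (hs : ∀ n, Summable (f n)) (hl : ∀ n, ∑' y, f n y ≤ (1 / 2 : ℝ) ^ n) :
    Summable fun y => ∑' n, f n y := by
  have h1 : Summable fun q : ℕ × Y => f q.1 q.2 := by
    rw [summable_prod_of_nonneg (fun q => hf q.1 q.2)]
    exact ⟨hs, Summable.of_nonneg_of_le (fun n => tsum_nonneg (hf n)) hl
      (summable_geometric_of_lt_one (by norm_num) (by norm_num))⟩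
  exact h1.prod_symm.prod

lemma no_humps (hb : IsGraph b) (hm : FinMeasure m) (hcc : CanCompact b m)
    (H : ∀ N : ℕ, ∃ w : X → ℝ, (∀ x, 0 ≤ w x) ∧ FinEnergy b w ∧ EE b w ≤ (1 / 2 : ℝ) ^ N ∧
      MemL2 m w ∧ ∑' x, w x ^ 2 * m x ≤ (1 / 2 : ℝ) ^ N ∧ ∃ x, (N : ℝ) ≤ w x) : False := by
  choose w h0 hE hEl h2 h2l hx using H
  have hterm : ∀ x n, w n x ^ 2 * m x ≤ (1 / 2 : ℝ) ^ n := fun x n =>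
    ((h2 n).le_tsum x (fun y _ => mul_nonneg (sq_nonneg _) (hm.pos y).le)).trans (h2l n)
  have hgeo : Summable fun n : ℕ => (1 / 2 : ℝ) ^ n :=
    summable_geometric_of_lt_one (by norm_num) (by norm_num)
  have hsq : ∀ x, Summable fun n => w n x ^ 2 := fun x => by
    refine Summable.of_nonneg_of_le (fun n => sq_nonneg _) (fun n => ?_) (hgeo.mul_right (m x)⁻¹)
    rw [← div_eq_mul_inv, le_div_iff₀ (hm.pos x)]
    exact hterm x n
  have hbdd : ∀ x, BddAbove (Set.range fun n => w n x) := fun x => by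
    refine ⟨√(∑' n, w n x ^ 2), ?_⟩
    rintro _ ⟨n, rfl⟩
    exact Real.le_sqrt_of_sq_le ((hsq x).le_tsum n (fun _ _ => sq_nonneg _))
  have hdiff : ∀ x y, Summable fun n => (w n x - w n y) ^ 2 := fun x y => by
    refine Summable.of_nonneg_of_le (fun n => sq_nonneg _) (fun n => ?_)
      (((hsq x).add (hsq y)).mul_left 2)
    nlinarith [sq_nonneg (w n x + w n y)]
  have hu : MemDQ b m (fun x => ⨆ n, w n x) := by
    constructor
    · have := swap_summable (f := fun n x => w n x ^ 2 * m x)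
        (fun n x => mul_nonneg (sq_nonneg _) (hm.pos x).le) h2 h2l
      refine Summable.of_nonneg_of_le (fun x => mul_nonneg (sq_nonneg _) (hm.pos x).le)
        (fun x => ?_) this
      rw [tsum_mul_right]
      refine mul_le_mul_of_nonneg_right ?_ (hm.pos x).le
      have := sup_sub_sq (fun n => w n x) (fun _ => 0) (hbdd x) ⟨0, by rintro _ ⟨n, rfl⟩; simp⟩
        (by simpa using hsq x)
      simpa using this
    · have := swap_summable (f := fun n (p : X × X) => b p.1 p.2 * (w n p.1 - w n p.2) ^ 2)
        (fun n p => mul_nonneg (hb.nonneg _ _) (sq_nonneg _)) hE hEl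
      refine Summable.of_nonneg_of_le (fun x => mul_nonneg (hb.nonneg _ _) (sq_nonneg _))
        (fun p => ?_) this
      rw [tsum_mul_left]
      exact mul_le_mul_of_nonneg_left
        (sup_sub_sq _ _ (hbdd p.1) (hbdd p.2) (hdiff _ _)) (hb.nonneg _ _)
  obtain ⟨M, hM⟩ := hcc _ hu
  obtain ⟨N, hN⟩ := exists_nat_gt M
  obtain ⟨x, hxN⟩ := hx N
  have h3 := le_ciSup (hbdd x) N
  have h4 := (le_abs_self _).trans (hM x)
  linarith

lemma memL2_of_bdd (hm : FinMeasure m) {w : X → ℝ} {R : ℝ} (hw : ∀ x, |w x| ≤ R) :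
    MemL2 m w := by
  refine Summable.of_nonneg_of_le (fun x => mul_nonneg (sq_nonneg _) (hm.pos x).le)
    (fun x => ?_) (hm.summable.mul_left (R ^ 2))
  refine mul_le_mul_of_nonneg_right ?_ (hm.pos x).le
  exact sq_le_sq' (by linarith [(abs_le.1 (hw x)).1]) (abs_le.1 (hw x)).2

lemma poincare (hb : IsGraph b) (hconn : GraphConnected b) (hm : FinMeasure m)
    (hcc : CanCompact b m) (x₀ : X) :
    ∃ C : ℝ, 0 < C ∧ ∀ u, MemDQ b m u → ∀ x, (u x - u x₀) ^ 2 ≤ C * EE b u := by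
  by_contra hcon
  push Not at hcon
  refine no_humps hb hm hcc fun N => ?_
  have hcon' : ∀ k : ℕ, ∃ u, MemDQ b m u ∧ ∃ x, ((k : ℝ) + 1) * EE b u < (u x - u x₀) ^ 2 :=
    fun k => hcon _ (by positivity)
  choose u hu x hx using hcon'
  set d : ℕ → ℝ := fun k => |u k (x k) - u k x₀| with hd
  have hdsq : ∀ k, d k ^ 2 = (u k (x k) - u k x₀) ^ 2 := fun k => sq_abs _
  have hdpos : ∀ k, 0 < d k := fun k => by
    have h1 : 0 < (u k (x k) - u k x₀) ^ 2 :=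
      lt_of_le_of_lt (mul_nonneg (by positivity) (EE_nonneg hb _)) (hx k)
    rw [← hdsq] at h1
    exact (abs_nonneg _).lt_of_ne (fun h0 => by rw [hd] at h1; simp only [← h0] at h1; norm_num at h1)
  set v : ℕ → X → ℝ := fun k y => min (N : ℝ) ((N / d k) * |u k y - u k x₀|) with hv
  have hv0 : ∀ k y, 0 ≤ v k y := fun k y => le_min (by positivity)
    (mul_nonneg (div_nonneg (by positivity) (hdpos k).le) (abs_nonneg _))
  have hvN : ∀ k y, v k y ≤ N := fun k y => min_le_left _ _
  have hvx : ∀ k, v k (x k) = N := fun k => by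
    simp only [hv]
    rw [show |u k (x k) - u k x₀| = d k from rfl, div_mul_cancel₀ _ (hdpos k).ne', min_self]
  have hvx0 : ∀ k, v k x₀ = 0 := fun k => by simp [hv]
  have hcontr : ∀ k y z, (v k y - v k z) ^ 2 ≤ (N / d k) ^ 2 * (u k y - u k z) ^ 2 := by
    intro k y z
    have hq : 0 ≤ (N : ℝ) / d k := div_nonneg (by positivity) (hdpos k).le
    have h1 : |v k y - v k z| ≤ abs ((N / d k) * |u k y - u k x₀| - (N / d k) * |u k z - u k x₀|) := by
      have := abs_min_sub_min_le_max (N : ℝ) ((N / d k) * |u k y - u k x₀|) N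
        ((N / d k) * |u k z - u k x₀|)
      simpa [hv] using this
    have h2 : abs ((N / d k) * |u k y - u k x₀| - (N / d k) * |u k z - u k x₀|) ≤
        (N / d k) * |u k y - u k z| := by
      rw [← mul_sub, abs_mul, abs_of_nonneg hq]
      refine mul_le_mul_of_nonneg_left ?_ hq
      refine (abs_abs_sub_abs_le_abs_sub _ _).trans ?_
      simp
    have h3 := h1.trans h2
    calc (v k y - v k z) ^ 2 = |v k y - v k z| ^ 2 := (sq_abs _).symm
      _ ≤ ((N / d k) * |u k y - u k z|) ^ 2 := pow_le_pow_left₀ (abs_nonneg _) h3 2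
      _ = _ := by rw [mul_pow, sq_abs]
  have hFE : ∀ k, FinEnergy b (v k) := fun k => (contraction hb (hu k).2 (hcontr k)).1
  have hEv : ∀ k : ℕ, EE b (v k) ≤ (N : ℝ) ^ 2 * (1 / ((k : ℝ) + 1)) := fun k => by
    refine (contraction hb (hu k).2 (hcontr k)).2.trans ?_
    have := (hx k).le
    rw [← hdsq] at this
    rw [div_pow, div_mul_eq_mul_div, mul_div_assoc]
    refine mul_le_mul_of_nonneg_left ?_ (by positivity)
    rw [div_le_div_iff₀ (pow_pos (hdpos k) 2) (by positivity)]
    linarith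
  have hlim : Filter.Tendsto (fun k : ℕ => (N : ℝ) ^ 2 * (1 / ((k : ℝ) + 1)))
      Filter.atTop (nhds 0) := by
    simpa using (tendsto_one_div_add_atTop_nhds_zero_nat (𝕜 := ℝ)).const_mul ((N : ℝ) ^ 2)
  have hEt : Filter.Tendsto (fun k => EE b (v k)) Filter.atTop (nhds 0) :=
    squeeze_zero (fun k => EE_nonneg hb _) hEv hlim
  have hpt : ∀ y, Filter.Tendsto (fun k => v k y ^ 2 * m y) Filter.atTop (nhds 0) := fun y => by
    obtain ⟨C, hC, h⟩ := path_bound hb hconn x₀ y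
    have : Filter.Tendsto (fun k => v k y ^ 2) Filter.atTop (nhds 0) := by
      refine squeeze_zero (g := fun k => C * EE b (v k)) (fun k => sq_nonneg _) (fun k => ?_)
        (by simpa using hEt.const_mul C)
      have := h (v k) (hFE k)
      rwa [hvx0, sub_zero] at this
    simpa using this.mul_const (m y)
  have hL2 : Filter.Tendsto (fun k => ∑' y, v k y ^ 2 * m y) Filter.atTop (nhds 0) := by
    have := tendsto_tsum_of_dominated_convergence (𝓕 := Filter.atTop)
      (f := fun k y => v k y ^ 2 * m y) (g := fun _ => (0 : ℝ))
      (bound := fun y => (N : ℝ) ^ 2 * m y) (hm.summable.mul_left _) hpt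
      (Filter.Eventually.of_forall fun k y => by
        rw [Real.norm_of_nonneg (mul_nonneg (sq_nonneg _) (hm.pos y).le)]
        exact mul_le_mul_of_nonneg_right (pow_le_pow_left₀ (hv0 k y) (hvN k y) 2) (hm.pos y).le)
    simpa using this
  have hε : (0 : ℝ) < (1 / 2) ^ N := by positivity
  obtain ⟨k, hk1, hk2⟩ := ((hEt.eventually (gt_mem_nhds hε)).and
    (hL2.eventually (gt_mem_nhds hε))).exists
  exact ⟨v k, hv0 k, hFE k, hk1.le, memL2_of_bdd hm (R := N)
    (fun y => by rw [abs_of_nonneg (hv0 k y)]; exact hvN k y), hk2.le, x k, (hvx k).ge⟩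

lemma summable_h (hm : FinMeasure m) {h : X → ℝ} (hh2 : MemL2 m h) :
    Summable fun x => |h x| * m x := by
  refine Summable.of_nonneg_of_le (fun x => mul_nonneg (abs_nonneg _) (hm.pos x).le)
    (fun x => ?_) (Summable.add hh2 hm.summable)
  have := (hm.pos x).le
  nlinarith [sq_nonneg (|h x| - 1), sq_abs (h x), abs_nonneg (h x)]

lemma bound_hexp (hm : FinMeasure m) (h : X → ℝ) {v : X → ℝ} {R : ℝ} (x : X) (hv : v x ≤ R) :
    ‖h x * Real.exp (v x) * m x‖ ≤ Real.exp R * (|h x| * m x) := by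
  rw [norm_mul, norm_mul, Real.norm_of_nonneg (hm.pos x).le,
    Real.norm_of_nonneg (Real.exp_pos _).le, Real.norm_eq_abs]
  have h1 := Real.exp_le_exp.2 hv
  have h2 : 0 ≤ |h x| * m x := mul_nonneg (abs_nonneg _) (hm.pos x).le
  nlinarith

lemma summable_hexp (hm : FinMeasure m) {h : X → ℝ} (hh2 : MemL2 m h) {v : X → ℝ} {R : ℝ}
    (hv : ∀ x, v x ≤ R) : Summable fun x => h x * Real.exp (v x) * m x :=
  Summable.of_norm_bounded ((summable_h hm hh2).mul_left (Real.exp R))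
    fun x => bound_hexp hm h x (hv x)

lemma bound_mean (hm : FinMeasure m) {v : X → ℝ} {R : ℝ} (x : X) (hv : |v x| ≤ R) :
    ‖v x * m x‖ ≤ R * m x := by
  rw [norm_mul, Real.norm_of_nonneg (hm.pos x).le, Real.norm_eq_abs]
  exact mul_le_mul_of_nonneg_right hv (hm.pos x).le

lemma nonempty_B (hb : IsGraph b) (hm : FinMeasure m)
    (c : ℝ) (hc : 0 < c) (h : X → ℝ) (hh2 : MemL2 m h) (x₀ : X) (hx₀ : 0 < h x₀)
    (hM : 0 < ∑' x, m x) :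
    ∃ v : X → ℝ, MemDQ b m v ∧
      (∑' x, h x * Real.exp (v x) * m x) = c * (∑' x, m x) := by
  classical
  set I : ℝ := ∑' x, h x * m x
  have hI : Summable fun x => h x * m x := by
    have := summable_hexp hm hh2 (v := fun _ => 0) (R := 0) (fun _ => le_rfl)
    simpa using this
  have hhm : 0 < h x₀ * m x₀ := mul_pos hx₀ (hm.pos x₀)
  -- choose the height
  set T : ℝ := 1 + (|I| + 1) / (h x₀ * m x₀) with hT
  have hT1 : 0 < T := by positivity
  set S : ℝ := I + (h x₀ * m x₀) * (T - 1) with hS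
  have hSpos : 0 < S := by
    have : (h x₀ * m x₀) * (T - 1) = |I| + 1 := by
      rw [hT, add_sub_cancel_left, mul_div_cancel₀ _ hhm.ne']
    rw [hS, this]
    linarith [neg_abs_le I]
  set a : ℝ := Real.log (c * (∑' x, m x) / S)
  have hea : Real.exp a = c * (∑' x, m x) / S := Real.exp_log (by positivity)
  set v : X → ℝ := fun x => (if x = x₀ then Real.log T else 0) + a with hv
  refine ⟨v, ⟨memL2_of_bdd hm (R := |Real.log T| + |a|) fun x => ?_, ?_⟩, ?_⟩
  · simp only [hv]
    refine (abs_add_le _ _).trans ?_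
    split_ifs <;> simp
  · have e1 : Summable fun p : X × X => b p.1 p.2 * (if p.1 = x₀ then 1 else 0) := by
      have hinj : Function.Injective (fun y : X => (x₀, y)) := fun y z hyz => by simpa using hyz
      rw [← hinj.summable_iff]
      · simpa [Function.comp_def] using hb.row_summable x₀
      · rintro ⟨p, q⟩ hp
        have : p ≠ x₀ := fun hpq => hp ⟨q, by simp [hpq]⟩
        simp [this]
    have e2 : Summable fun p : X × X => b p.1 p.2 * (if p.2 = x₀ then 1 else 0) := by
      have := e1.prod_symm
      refine this.congr fun p => ?_
      simp [hb.symm p.1 p.2]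
    refine Summable.of_nonneg_of_le (fun p => mul_nonneg (hb.nonneg _ _) (sq_nonneg _))
      (fun p => ?_) ((e1.add e2).mul_left (Real.log T ^ 2))
    have := hb.nonneg p.1 p.2
    have := mul_nonneg this (sq_nonneg (Real.log T))
    simp only [hv]
    split_ifs <;> simp <;> nlinarith
  · have : ∀ x, h x * Real.exp (v x) * m x =
        Real.exp a * (h x * m x + (if x = x₀ then h x₀ * m x₀ * (T - 1) else 0)) := fun x => by
      simp only [hv]
      rw [Real.exp_add]
      split_ifs with hx
      · rw [Real.exp_log hT1, hx]; ring
      · simp; ring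
    rw [tsum_congr this, tsum_mul_left, Summable.tsum_add hI
      (summable_of_ne_finset_zero (s := {x₀}) (by intro x hx; simp at hx; simp [hx])),
      tsum_ite_eq, hea]
    exact div_mul_cancel₀ _ hSpos.ne'

lemma coercive (hb : IsGraph b) (hconn : GraphConnected b) (hm : FinMeasure m)
    (hcc : CanCompact b m) (c : ℝ) (hc : 0 < c) (h : X → ℝ) (hh2 : MemL2 m h) (x₀ : X)
    (hx₀ : 0 < h x₀) (hM : 0 < ∑' x, m x) :
    ∃ C A : ℝ, 0 < C ∧ ∀ v : X → ℝ, MemDQ b m v →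
      (∑' x, h x * Real.exp (v x) * m x) = c * (∑' x, m x) →
      ∃ s, 0 ≤ s ∧ s ^ 2 = C * EE b v ∧ (∀ x, |v x - v x₀| ≤ s) ∧ A - s ≤ v x₀ ∧
        (c * ∑' x, m x) * (v x₀ - s) ≤ c * ∑' x, v x * m x := by
  obtain ⟨C, hC, hP⟩ := poincare hb hconn hm hcc x₀
  have hHs := summable_h hm hh2
  set H := ∑' x, |h x| * m x with hH
  have hHpos : 0 < H := hHs.tsum_pos (fun x => mul_nonneg (abs_nonneg _) (hm.pos x).le) x₀
    (mul_pos (abs_pos.2 hx₀.ne') (hm.pos x₀))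
  refine ⟨C, Real.log (c * (∑' x, m x) / H), hC, fun v hv hvB => ?_⟩
  have hnn : 0 ≤ C * EE b v := mul_nonneg hC.le (EE_nonneg hb v)
  have hs : ∀ x, |v x - v x₀| ≤ √(C * EE b v) := fun x => Real.abs_le_sqrt (hP v hv x)
  set s := √(C * EE b v) with hsdef
  have hle : ∀ x, v x ≤ v x₀ + s := fun x => by linarith [(abs_le.1 (hs x)).2]
  refine ⟨s, Real.sqrt_nonneg _, Real.sq_sqrt hnn, hs, ?_, ?_⟩
  · have h1 : c * (∑' x, m x) ≤ Real.exp (v x₀ + s) * H := by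
      rw [← hvB, hH, ← tsum_mul_left]
      exact Summable.tsum_le_tsum
        (fun x => (le_abs_self _).trans (bound_hexp hm h x (hle x)))
        (summable_hexp hm hh2 hle) (hHs.mul_left _)
    have h2 : Real.log (c * (∑' x, m x) / H) ≤ v x₀ + s := by
      rw [Real.log_le_iff_le_exp (by positivity), div_le_iff₀ hHpos]
      exact h1
    linarith
  · rw [mul_assoc]
    refine mul_le_mul_of_nonneg_left ?_ hc.le
    rw [mul_comm, ← tsum_mul_left]
    obtain ⟨R, hR⟩ := hcc v hv
    refine Summable.tsum_le_tsum (fun x => mul_le_mul_of_nonneg_right ?_ (hm.pos x).le)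
      (hm.summable.mul_left _) (Summable.of_norm_bounded (hm.summable.mul_left R)
        fun x => bound_mean hm x (hR x))
    linarith [(abs_le.1 (hs x)).1]

lemma exists_min [Countable X] (hb : IsGraph b) (hconn : GraphConnected b) (hm : FinMeasure m)
    (hcc : CanCompact b m) (c : ℝ) (hc : 0 < c) (h : X → ℝ) (hh2 : MemL2 m h) (x₀ : X)
    (hx₀ : 0 < h x₀) (hM : 0 < ∑' x, m x) :
    ∃ u : X → ℝ,
      (MemDQ b m u ∧ (∑' x, h x * Real.exp (u x) * m x) = c * (∑' x, m x)) ∧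
      ∀ v : X → ℝ, MemDQ b m v →
        (∑' x, h x * Real.exp (v x) * m x) = c * (∑' x, m x) →
        EE b u / 4 + c * ∑' x, u x * m x ≤ EE b v / 4 + c * ∑' x, v x * m x := by
  obtain ⟨C, A, hC, hco⟩ := coercive hb hconn hm hcc c hc h hh2 x₀ hx₀ hM
  set K := c * ∑' x, m x with hK
  have hKpos : 0 < K := mul_pos hc hM
  set F : (X → ℝ) → ℝ := fun v => EE b v / 4 + c * ∑' x, v x * m x with hF
  set B : Set (X → ℝ) :=
    {v | MemDQ b m v ∧ (∑' x, h x * Real.exp (v x) * m x) = K} with hB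
  have hBne : B.Nonempty := nonempty_B hb hm c hc h hh2 x₀ hx₀ hM
  -- the quadratic lower bound
  have hquad : ∀ v ∈ B, ∃ s, 0 ≤ s ∧ (∀ x, |v x - v x₀| ≤ s) ∧ A - s ≤ v x₀ ∧
      K * (v x₀ - s) ≤ F v ∧ s ^ 2 ≤ 8 * C * (F v + 8 * C * K ^ 2 - K * A) := by
    rintro v ⟨hv, hvB⟩
    obtain ⟨s, hs0, hs2, hsx, hsA, hsm⟩ := hco v hv hvB
    have hE : EE b v = s ^ 2 / C := by rw [hs2]; field_simp
    have hE0 := EE_nonneg hb v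
    refine ⟨s, hs0, hsx, hsA, by simp only [hF]; linarith, ?_⟩
    have h1 : K * (A - 2 * s) ≤ c * ∑' x, v x * m x :=
      le_trans (mul_le_mul_of_nonneg_left (by linarith) hKpos.le) hsm
    have h2 : C * F v = s ^ 2 / 4 + C * (c * ∑' x, v x * m x) := by
      simp only [hF]; rw [hE]; field_simp
    have h3 := mul_le_mul_of_nonneg_left h1 hC.le
    nlinarith [sq_nonneg (s - 8 * C * K)]
  have hbdd : BddBelow (F '' B) := by
    refine ⟨K * A - 8 * C * K ^ 2, ?_⟩
    rintro _ ⟨v, hv, rfl⟩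
    obtain ⟨s, -, -, -, -, h5⟩ := hquad v hv
    have : 0 ≤ F v + 8 * C * K ^ 2 - K * A :=
      nonneg_of_mul_nonneg_right ((sq_nonneg s).trans h5) (by positivity)
    linarith
  obtain ⟨f, hfanti, hflim, hfmem⟩ := exists_seq_tendsto_sInf (hBne.image F) hbdd
  choose v hvB hvf using hfmem
  have hFle : ∀ n, F (v n) ≤ f 0 := fun n => (hvf n).le.trans (hfanti (Nat.zero_le n))
  set S := √(8 * C * (f 0 + 8 * C * K ^ 2 - K * A)) with hS
  obtain ⟨R, hR⟩ : ∃ R, ∀ n x, |v n x| ≤ R := by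
    refine ⟨|A| + |f 0 / K| + 3 * S, fun n x => ?_⟩
    obtain ⟨s, hs0, h1, h2, h3, h4⟩ := hquad (v n) (hvB n)
    have hsS : s ≤ S := Real.le_sqrt_of_sq_le (h4.trans
      (mul_le_mul_of_nonneg_left (by linarith [hFle n]) (by positivity)))
    have h5 : v n x₀ - s ≤ f 0 / K := by
      rw [le_div_iff₀ hKpos]; linarith [hFle n]
    have h6 := abs_le.1 (h1 x)
    have h7 := le_abs_self (f 0 / K)
    have h8 := neg_abs_le A
    have h9 := abs_nonneg (f 0 / K)
    have h10 := abs_nonneg A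
    rw [abs_le]
    constructor <;> linarith [h6.1, h6.2]
  have hcomp : IsCompact (Set.pi Set.univ fun _ : X => Set.Icc (-R) R) :=
    isCompact_univ_pi fun _ => isCompact_Icc
  obtain ⟨u, hu, φ, hφ, hlim⟩ := hcomp.tendsto_subseq (x := v)
    (fun n x _ => abs_le.1 (hR n x))
  have huR : ∀ x, |u x| ≤ R := fun x => abs_le.2 (hu x trivial)
  rw [tendsto_pi_nhds] at hlim
  simp only [Function.comp_def] at hlim
  have hmean : Filter.Tendsto (fun n => ∑' x, v (φ n) x * m x) Filter.atTop
      (nhds (∑' x, u x * m x)) :=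
    tendsto_tsum_of_dominated_convergence (bound := fun x => R * m x) (hm.summable.mul_left R)
      (fun x => (hlim x).mul_const _)
      (Filter.Eventually.of_forall fun n x => bound_mean hm x (hR _ x))
  have hcon : Filter.Tendsto (fun n => ∑' x, h x * Real.exp (v (φ n) x) * m x) Filter.atTop
      (nhds (∑' x, h x * Real.exp (u x) * m x)) :=
    tendsto_tsum_of_dominated_convergence
      ((summable_h hm hh2).mul_left (Real.exp R))
      (fun x => (((Real.continuous_exp.tendsto _).comp (hlim x)).const_mul _).mul_const _)
      (Filter.Eventually.of_forall fun n x => bound_hexp hm h x (abs_le.1 (hR _ x)).2)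
  have huK : (∑' x, h x * Real.exp (u x) * m x) = K := by
    refine tendsto_nhds_unique hcon ?_
    simp only [fun n => (hvB (φ n)).2]
    exact tendsto_const_nhds
  set I := sInf (F '' B) with hI
  have hElim : Filter.Tendsto (fun n => EE b (v (φ n))) Filter.atTop
      (nhds (4 * (I - c * ∑' x, u x * m x))) := by
    have h1 := ((hflim.comp hφ.tendsto_atTop).sub (hmean.const_mul c)).const_mul 4
    refine h1.congr fun n => ?_
    simp only [Function.comp_apply]
    rw [← hvf (φ n)]
    simp only [hF]
    ring
  have hfin : ∀ s : Finset (X × X), ∑ p ∈ s, b p.1 p.2 * (u p.1 - u p.2) ^ 2 ≤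
      4 * (I - c * ∑' x, u x * m x) := fun s => by
    refine le_of_tendsto_of_tendsto'
      (f := fun n => ∑ p ∈ s, b p.1 p.2 * (v (φ n) p.1 - v (φ n) p.2) ^ 2) ?_ hElim ?_
    · exact tendsto_finsetSum _ fun p _ => (((hlim p.1).sub (hlim p.2)).pow 2).const_mul _
    · intro n
      exact (hvB (φ n)).1.2.sum_le_tsum s
        (fun p _ => mul_nonneg (hb.nonneg _ _) (sq_nonneg _))
  have hnn : ∀ p : X × X, 0 ≤ b p.1 p.2 * (u p.1 - u p.2) ^ 2 :=
    fun p => mul_nonneg (hb.nonneg _ _) (sq_nonneg _)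
  have huE : FinEnergy b u := summable_of_sum_le hnn hfin
  have hEu : EE b u ≤ 4 * (I - c * ∑' x, u x * m x) := huE.tsum_le_of_sum_le hfin
  refine ⟨u, ⟨⟨memL2_of_bdd hm huR, huE⟩, huK⟩, fun w hw hwB => ?_⟩
  have h1 : I ≤ F w := csInf_le hbdd ⟨w, ⟨hw, hwB⟩, rfl⟩
  simp only [hF] at h1
  linarith

end Aux

/-- the set `B = {v ∈ D(Q) : ⟨h e^v, 1⟩ = c m(X)}` is nonempty and
`J(v) = (1/2)Q(v) + c m(X) v̄` attains its infimum on `B`. -/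
theorem stmt19 {X : Type*} [Countable X] (b : X → X → ℝ) (m : X → ℝ)
    (hb : IsGraph b) (hconn : GraphConnected b) (hm : FinMeasure m)
    (hcc : CanCompact b m) (c : ℝ) (hc : 0 < c)
    (h : X → ℝ) (hh2 : MemL2 m h) (hpos : ∃ x₀, 0 < h x₀) :
    (∃ v : X → ℝ, MemDQ b m v ∧
      (∑' x, h x * Real.exp (v x) * m x) = c * (∑' x, m x)) ∧
    (∃ u : X → ℝ,
      (MemDQ b m u ∧ (∑' x, h x * Real.exp (u x) * m x) = c * (∑' x, m x)) ∧
      ∀ v : X → ℝ, MemDQ b m v →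
        (∑' x, h x * Real.exp (v x) * m x) = c * (∑' x, m x) →
        (1 / 2) * energy b u + c * (∑' x, m x) * mean m u ≤
          (1 / 2) * energy b v + c * (∑' x, m x) * mean m v) := by
  obtain ⟨x₀, hx₀⟩ := hpos
  have hM : 0 < ∑' x, m x := hm.summable.tsum_pos (fun x => (hm.pos x).le) x₀ (hm.pos x₀)
  refine ⟨nonempty_B hb hm c hc h hh2 x₀ hx₀ hM, ?_⟩
  obtain ⟨u, hu, hmin⟩ := exists_min hb hconn hm hcc c hc h hh2 x₀ hx₀ hM
  have hJ : ∀ v : X → ℝ, (1 / 2) * energy b v + c * (∑' x, m x) * mean m v =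
      EE b v / 4 + c * ∑' x, v x * m x := fun v => by
    unfold energy mean EE
    field_simp
    ring
  refine ⟨u, hu, fun v hv hvB => ?_⟩
  rw [hJ, hJ]
  exact hmin v hv hvB
end
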